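/- arXiv:2111.04468 — 2 statements merged into one kernel-verified Lean document; each statement's English description precedes it below -/
import Mathlib

section
/- Let a, b ∈ ℤ[X] satisfy a(X) + a(−1−X) = 0 and b(X) = b(−X) as polynomial identities, and b(0) = 0. Let (u_n)_{n ≥ −1} be any integer sequence satisfying u_n = a(n)·u_{n−1} + b(n)·u_{n−2} for all n ≥ 1. Then for every odd prime r and every integer k ≥ 1, r^k divides u_n for all n ≥ (k+1)·r − 1. -/
open Polynomial

/-!
Modulo `r`, the polynomials `a` and `b` are `r`-periodic, and together with periodicity the
symmetries `a(-1 - X) = -a(X)`, `b(-X) = b(X)` become a reflection of the coefficients on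
`{0, …, r}`. Moving one factor of a product of continuants across this reflection flips a sign at
each of the `r` steps, so for odd `r` the continuant of a full period equals its own negative and
vanishes modulo `r`. Hence every block of `r` further terms of `u` contributes one more factor `r`:
if `r ^ k` divides `u` from `N - 1` on, where `r ∣ N`, then modulo `r ^ (k + 1)` the recursion
restarts at `N` with `r`-periodic coefficients. The term `b(N) u_{N-2}`, which has only
`r ^ (k - 1) ∣ u_{N-2}`, disappears because an even polynomial vanishing at `0` satisfies
`r ^ 2 ∣ b(N)`.
-/

section Continuant

variable {R S M : Type*} [CommRing R] [CommRing S] [AddCommGroup M] [Module R M]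

/-- The continuant of the recursion with coefficients `A` and `B`: its solution with initial values
`0, 1`. The index is shifted by one from the usual convention, so that `continuant A B (n + 1)`
is the continuant of `A 0, …, A (n - 1)`; it does not depend on `B 0`. -/
def continuant (A B : ℕ → R) : ℕ → R
  | 0 => 0
  | 1 => 1
  | n + 2 => A n * continuant A B (n + 1) + B n * continuant A B n

variable {A B : ℕ → R}

theorem map_continuant (f : R →+* S) (n : ℕ) :
    f (continuant A B n) = continuant (fun i => f (A i)) (fun i => f (B i)) n := by
  induction n using Nat.twoStepInduction with
  | zero => simp [continuant]
  | one => simp [continuant]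
  | more n ih₀ ih₁ => simp [continuant, ih₀, ih₁]

theorem eq_continuant_smul_of_recurrence (hB : B 0 = 0) {v : ℕ → M}
    (hv : ∀ n, v (n + 2) = A n • v (n + 1) + B n • v n) (n : ℕ) :
    v (n + 1) = continuant A B (n + 1) • v 1 := by
  induction n using Nat.twoStepInduction with
  | zero => simp [continuant]
  | one => simp [hv 0, continuant, hB]
  | more n ih₀ ih₁ =>
    rw [hv (n + 1), ih₀, ih₁, smul_smul, smul_smul, ← add_smul]
    rfl

theorem continuant_eq_zero_of_lt {m n : ℕ} (hB : B m = 0) (hm : continuant A B (m + 1) = 0)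
    (hmn : m < n) : continuant A B n = 0 := by
  obtain ⟨j, rfl⟩ := Nat.exists_eq_add_of_lt hmn
  have h := eq_continuant_smul_of_recurrence (A := fun i => A (m + i)) (B := fun i => B (m + i))
    hB (v := fun i => continuant A B (m + i)) (fun _ => rfl) j
  simpa only [← add_assoc, hm, smul_zero] using h

theorem continuant_mul_sub_eq_neg_one_pow_mul {r : ℕ} (hB₀ : B 0 = 0)
    (hA : ∀ i j, i + j + 1 = r → A j = -A i) (hB : ∀ i j, i + j + 1 = r → B j = B (i + 1))
    {i j : ℕ} (hij : i + j = r) :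
    continuant A B (i + 1) * continuant A B (j + 1)
      - B i * continuant A B i * continuant A B j = (-1) ^ i * continuant A B (r + 1) := by
  induction i generalizing j with
  | zero =>
    obtain rfl : j = r := by omega
    simp [continuant, hB₀]
  | succ i ih =>
    have h := ih (j := j + 1) (by omega)
    rw [continuant, hA i j (by omega), hB i j (by omega)] at h
    rw [continuant, pow_succ]
    linear_combination -h

theorem two_mul_continuant_eq_zero_of_odd {r : ℕ} (hr : Odd r) (hB₀ : B 0 = 0)
    (hA : ∀ i j, i + j + 1 = r → A j = -A i) (hB : ∀ i j, i + j + 1 = r → B j = B (i + 1)) :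
    2 * continuant A B (r + 1) = 0 := by
  have h := continuant_mul_sub_eq_neg_one_pow_mul hB₀ hA hB (add_zero r)
  simp only [hr.neg_one_pow, continuant] at h
  linear_combination h

end Continuant

section SymmetricPolynomial

variable {R M : Type*} [CommRing R] [AddCommGroup M] [Module R M] {a b p : R[X]} {r : ℕ}

theorem isCoprime_natCast_two_of_odd (hr : Odd r) : IsCoprime (r : R) 2 := by
  simpa using (Nat.isCoprime_iff_coprime.mpr (Nat.coprime_two_right.mpr hr)).map (Int.castRingHom R)

theorem eval_neg_one_sub_of_add_comp_eq_zero (ha : a + a.comp (-1 - X) = 0) (x : R) :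
    a.eval (-1 - x) = -a.eval x := by
  have h := congrArg (eval x) ha
  simp only [eval_add, eval_comp, eval_sub, eval_neg, eval_one, eval_X, eval_zero] at h
  linear_combination h

theorem eval_neg_of_comp_neg_X_eq_self (hb : b.comp (-X) = b) (x : R) :
    b.eval (-x) = b.eval x := by
  simpa [eval_comp] using congrArg (eval x) hb

theorem two_mul_sq_dvd_eval_add_eval_neg_sub (p : R[X]) (x : R) :
    2 * x ^ 2 ∣ p.eval x + p.eval (-x) - 2 * p.eval 0 := by
  obtain ⟨q, c, rfl⟩ : ∃ (q : R[X]) (c : R), q * X + C c = p := ⟨_, _, p.divX_mul_X_add⟩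
  obtain ⟨d, hd⟩ := sub_dvd_eval_sub x (-x) q
  refine ⟨d, ?_⟩
  simp only [eval_add, eval_mul, eval_X, eval_C]
  linear_combination x * hd

theorem sq_dvd_eval_of_dvd {c x : R} (hb : b.comp (-X) = b) (hb₀ : b.eval 0 = 0)
    (hc : IsCoprime c 2) (hx : c ∣ x) : c ^ 2 ∣ b.eval x := by
  have h : 2 * x ^ 2 ∣ 2 * b.eval x := by
    simpa [eval_neg_of_comp_neg_X_eq_self hb, hb₀, ← two_mul] using
      two_mul_sq_dvd_eval_add_eval_neg_sub b x
  exact hc.pow_left.dvd_of_dvd_mul_left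
    ((pow_dvd_pow_of_dvd hx 2).trans ((dvd_mul_left _ _).trans h))

theorem eval_smul_eq_of_dvd_sub {c x y : R} {m : M} (hxy : c ∣ x - y) (hm : c • m = 0) :
    p.eval x • m = p.eval y • m := by
  obtain ⟨d, hd⟩ := hxy.trans (sub_dvd_eval_sub x y p)
  rw [← sub_eq_zero, ← sub_smul, hd, mul_comm, mul_smul, hm, smul_zero]

theorem continuant_eval_eq_zero (ha : a + a.comp (-1 - X) = 0) (hb : b.comp (-X) = b)
    (hb₀ : b.eval 0 = 0) (hr : Odd r) (hr₀ : (r : R) = 0) {n : ℕ} (hn : r < n) :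
    continuant (fun i => a.eval (i : R)) (fun i => b.eval (i : R)) n = 0 := by
  have reflect {i j : ℕ} (hij : i + j + 1 = r) : (j : R) = -1 - i := by
    have h : (i : R) + j + 1 = 0 := by rw [← hr₀, ← hij]; push_cast; rfl
    linear_combination h
  have h : 2 * continuant (fun i => a.eval (i : R)) (fun i => b.eval (i : R)) (r + 1) = 0 := by
    refine two_mul_continuant_eq_zero_of_odd hr (by simpa using hb₀) (fun i j hij => ?_)
      fun i j hij => ?_
    · rw [reflect hij, eval_neg_one_sub_of_add_comp_eq_zero ha]
    · rw [← eval_neg_of_comp_neg_X_eq_self hb, reflect hij]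
      congr 1
      push_cast
      ring
  have two_isUnit : IsUnit (2 : R) := by
    simpa [hr₀, isCoprime_zero_left] using isCoprime_natCast_two_of_odd (R := R) hr
  exact continuant_eq_zero_of_lt (by simpa [hr₀] using hb₀) (two_isUnit.mul_right_eq_zero.mp h) hn

theorem natCast_dvd_continuant_eval (ha : a + a.comp (-1 - X) = 0) (hb : b.comp (-X) = b)
    (hb₀ : b.eval 0 = 0) (hr : Odd r) {n : ℕ} (hn : r < n) :
    (r : R) ∣ continuant (fun i => a.eval (i : R)) (fun i => b.eval (i : R)) n := by
  let f := Ideal.Quotient.mk (Ideal.span {(r : R)})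
  have map_eval (p : R[X]) (i : ℕ) : f (p.eval (i : R)) = (p.map f).eval (i : R ⧸ _) := by
    rw [← map_natCast f, eval_map_apply]
  rw [← Ideal.Quotient.eq_zero_iff_dvd, map_continuant]
  simp only [f, map_eval]
  refine continuant_eval_eq_zero ?_ ?_ ?_ hr ?_ hn
  · simpa [Polynomial.map_comp] using congrArg (Polynomial.map f) ha
  · simpa [Polynomial.map_comp] using congrArg (Polynomial.map f) hb
  · simp [eval_zero_map, hb₀]
  · rw [← map_natCast f, Ideal.Quotient.eq_zero_iff_dvd]

end SymmetricPolynomial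

section Recurrence

variable {R M : Type*} [CommRing R] [AddCommGroup M] [Module R M] {a b : R[X]} {r : ℕ} {N : ℤ}

theorem eq_zero_of_natCast_smul_eq_zero {u : ℤ → M} (ha : a + a.comp (-1 - X) = 0)
    (hb : b.comp (-X) = b) (hb₀ : b.eval 0 = 0)
    (hrec : ∀ n, N ≤ n → u n = a.eval (n : R) • u (n - 1) + b.eval (n : R) • u (n - 2))
    (hr : Odd r) (hrN : (r : ℤ) ∣ N) (htors : ∀ n, N - 1 ≤ n → (r : R) • u n = 0)
    (hbN : b.eval (N : R) • u (N - 2) = 0) {n : ℤ} (hn : N + r - 1 ≤ n) : u n = 0 := by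
  have periodic (p : R[X]) (j : ℕ) {m : ℤ} (hm : N - 1 ≤ m) :
      p.eval ((N + j : ℤ) : R) • u m = p.eval (j : R) • u m :=
    eval_smul_eq_of_dvd_sub (by simpa using Int.cast_dvd_cast (α := R) _ _ hrN) (htors m hm)
  have hv (j : ℕ) : u (N - 2 + (j + 2 : ℕ)) =
      a.eval (j : R) • u (N - 2 + (j + 1 : ℕ)) + b.eval (j : R) • u (N - 2 + j) := by
    rw [show N - 2 + (j + 2 : ℕ) = N + j by push_cast; ring, hrec (N + j) (by omega),
      show N + j - 1 = N - 2 + (j + 1 : ℕ) by push_cast; ring,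
      show N + j - 2 = N - 2 + (j : ℤ) by ring, periodic a j (by omega)]
    congr 1
    cases j with
    | zero => simpa [hb₀] using hbN
    | succ j => exact periodic b (j + 1) (by omega)
  obtain ⟨j, rfl⟩ : ∃ j : ℕ, n = N - 2 + (j + 1 : ℕ) := ⟨(n - N + 1).toNat, by omega⟩
  obtain ⟨c, hc⟩ := natCast_dvd_continuant_eval ha hb hb₀ hr (show r < j + 1 by omega)
  rw [eq_continuant_smul_of_recurrence (v := fun i : ℕ => u (N - 2 + i)) (by simpa using hb₀) hv j,
    hc, mul_comm, mul_smul, htors _ (by omega), smul_zero]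

theorem dvd_of_dvd_natCast_mul {u : ℤ → R} {d : R} (ha : a + a.comp (-1 - X) = 0)
    (hb : b.comp (-X) = b) (hb₀ : b.eval 0 = 0)
    (hrec : ∀ n, N ≤ n → u n = a.eval (n : R) * u (n - 1) + b.eval (n : R) * u (n - 2))
    (hr : Odd r) (hrN : (r : ℤ) ∣ N) (hd : ∀ n, N - 1 ≤ n → d ∣ r * u n)
    (hbN : d ∣ b.eval (N : R) * u (N - 2)) {n : ℤ} (hn : N + r - 1 ≤ n) : d ∣ u n := by
  let f := Ideal.Quotient.mk (Ideal.span {d})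
  have smul_eq_zero {x y : R} (h : d ∣ x * y) : x • f y = 0 :=
    (Ideal.Quotient.eq_zero_iff_dvd d (x * y)).mpr h
  refine (Ideal.Quotient.eq_zero_iff_dvd d (u n)).mp <|
    eq_zero_of_natCast_smul_eq_zero (u := fun m => f (u m)) ha hb hb₀ (fun m hm => ?_) hr hrN
      (fun m hm => smul_eq_zero (hd m hm)) (smul_eq_zero hbN) hn
  exact congrArg f (hrec m hm)

theorem natCast_pow_succ_dvd {u : ℤ → R} {k : ℕ} (ha : a + a.comp (-1 - X) = 0)
    (hb : b.comp (-X) = b) (hb₀ : b.eval 0 = 0)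
    (hrec : ∀ n, N ≤ n → u n = a.eval (n : R) * u (n - 1) + b.eval (n : R) * u (n - 2))
    (hr : Odd r) (hrN : (r : ℤ) ∣ N) (hu : ∀ n, N - 1 ≤ n → (r : R) ^ k ∣ u n)
    (hprev : (r : R) ^ k ∣ r * u (N - 2)) {n : ℤ} (hn : N + r - 1 ≤ n) :
    (r : R) ^ (k + 1) ∣ u n := by
  refine dvd_of_dvd_natCast_mul ha hb hb₀ hrec hr hrN
    (fun m hm => pow_succ' (r : R) k ▸ mul_dvd_mul_left _ (hu m hm)) ?_ hn
  have hsq : (r : R) ^ 2 ∣ b.eval (N : R) :=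
    sq_dvd_eval_of_dvd hb hb₀ (isCoprime_natCast_two_of_odd hr)
      (by simpa using Int.cast_dvd_cast (α := R) _ _ hrN)
  calc (r : R) ^ (k + 1) = r * r ^ k := pow_succ' _ _
    _ ∣ r * (r * u (N - 2)) := mul_dvd_mul_left _ hprev
    _ = r ^ 2 * u (N - 2) := by ring
    _ ∣ b.eval (N : R) * u (N - 2) := mul_dvd_mul_right hsq _

theorem stmt_9_general {u : ℤ → R} (ha : a + a.comp (-1 - X) = 0) (hb : b.comp (-X) = b)
    (hb₀ : b.eval 0 = 0)
    (hrec : ∀ n : ℤ, 1 ≤ n → u n = a.eval (n : R) * u (n - 1) + b.eval (n : R) * u (n - 2))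
    (hr : Odd r) (k : ℕ) {n : ℤ} (hn : ((k : ℤ) + 1) * r - 1 ≤ n) : (r : R) ^ k ∣ u n := by
  have hr_pos : (1 : ℤ) ≤ r := by exact_mod_cast hr.pos
  have step (k : ℕ) := natCast_pow_succ_dvd (N := (k + 1) * r) (k := k) ha hb hb₀
    (fun m hm => hrec m (by nlinarith)) hr (dvd_mul_left _ _)
  induction k using Nat.twoStepInduction generalizing n with
  | zero => simp
  | one => exact step 0 (by simp) (by simp) (by push_cast at hn ⊢; linarith)
  | more k ih₀ ih₁ =>
    refine step (k + 1) (fun m hm => ih₁ hm) ?_ (by push_cast at hn ⊢; linarith)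
    rw [pow_succ']
    exact mul_dvd_mul_left _ (ih₀ (by push_cast; linarith))

end Recurrence

/-- prime-power version of Theorem 5's key step.
If `a(X) + a(−1−X) = 0`, `b(X) = b(−X)` as polynomial identities, and `b(0) = 0`,
then for any integer sequence `u` (indexed by `ℤ`, arbitrary values `u₋₁, u₀`)
satisfying `u_n = a(n)·u_{n−1} + b(n)·u_{n−2}` for all `n ≥ 1`, every odd prime `r`
and every `k ≥ 1` satisfy `r^k ∣ u_n` for all `n ≥ (k+1)·r − 1`. -/
theorem stmt_9 (a b : Polynomial ℤ)
    (ha : a + a.comp (-1 - Polynomial.X) = 0)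
    (hb : b.comp (-Polynomial.X) = b)
    (hb0 : b.eval 0 = 0)
    (u : ℤ → ℤ)
    (hrec : ∀ n : ℤ, 1 ≤ n → u n = a.eval n * u (n - 1) + b.eval n * u (n - 2)) :
    ∀ r : ℕ, r.Prime → Odd r → ∀ k : ℕ, 1 ≤ k →
      ∀ n : ℤ, ((k : ℤ) + 1) * (r : ℤ) - 1 ≤ n → (r : ℤ) ^ k ∣ u n := by
  intro r _ hr k _ n hn
  simpa using stmt_9_general ha hb hb0 (by simpa using hrec) hr k hn
end

section
/- Let d ≥ 1 and let a, b ∈ ℤ[X] with deg a = d, deg b = 2d, positive leading coefficients A and B, and a(n) > 0, b(n) > 0 for all integers n ≥ 1. Let p, q be the convergents of PCF[a,b] and let α = (A + √(A² + 4B))/2 be the larger root of x² = Ax + B (so B < α²). Then the limit L = lim_{n→∞} p_n/q_n exists, L ≠ p_n/q_n for all n, and lim_{n→∞} (1/n)·ln|L − p_n/q_n| = ln B − 2·ln α; i.e., the convergence error satisfies |L − p_n/q_n| ≐ (B/α²)^n. -/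
/-!
Consecutive convergents differ by `(-1) ^ n * c n`, where by the determinant formula
`c n = b 1 ⋯ b (n + 1) / (q n * q (n + 1))`; so once `c` decreases geometrically, the error of the
`n`-th convergent lies between `c n - c (n + 1)` and `c n`. The decay rate is read off the
normalised denominator ratios `s n = q (n + 1) / (a (n + 1) * q n)`: they satisfy
`s (n + 1) = 1 + β n / s n` with `β n = b (n + 2) / (a (n + 1) * a (n + 2)) → B / A ^ 2`, and
`c (n + 1) / c n = 1 - 1 / s (n + 1)`.

If `β` is constant, equal to `t * (t - 1)`, the map `s ↦ 1 + β / s` has fixed points `t` and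
`1 - t`, and in the Möbius coordinate `(s - t) / (s + t - 1)` it is multiplication by
`-(t - 1) / t`. For `β n → t * (t - 1)` this contraction is only perturbed by a null sequence,
whence `s n → t`. Here `t = α / A`, which gives the rate `1 - A / α = B / α ^ 2`.
-/

open Filter Polynomial

theorem tendsto_zero_of_le_mul_add {v e : ℕ → ℝ} {κ : ℝ} (hκ₀ : 0 ≤ κ) (hκ₁ : κ < 1)
    (hv : ∀ n, 0 ≤ v n) (he : Tendsto e atTop (nhds 0)) (h : ∀ n, v (n + 1) ≤ κ * v n + e n) :
    Tendsto v atTop (nhds 0) := by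
  refine tendsto_order.2 ⟨fun y hy => .of_forall fun n => hy.trans_le (hv n), fun ε hε => ?_⟩
  have hsmall : ∀ᶠ n in atTop, e n < (1 - κ) * (ε / 2) :=
    he.eventually_lt_const (mul_pos (sub_pos.2 hκ₁) (half_pos hε))
  obtain ⟨N, hN⟩ := eventually_atTop.1 hsmall
  have hgeom (k : ℕ) : v (k + N) - ε / 2 ≤ κ ^ k * (v (0 + N) - ε / 2) :=
    le_geom (u := fun k => v (k + N) - ε / 2) hκ₀ k fun j _ => by
      rw [add_right_comm]
      linarith [h (j + N), hN (j + N) (Nat.le_add_left N j)]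
  have hpow : Tendsto (fun k => κ ^ k * (v (0 + N) - ε / 2)) atTop (nhds 0) := by
    simpa using (tendsto_pow_atTop_nhds_zero_of_lt_one hκ₀ hκ₁).mul_const (v (0 + N) - ε / 2)
  rw [← map_add_atTop_eq_nat N, eventually_map]
  filter_upwards [hpow.eventually_lt_const (half_pos hε)] with k hk
  linarith [hgeom k]

theorem tendsto_inv_mul_log_of_tendsto_ratio {c : ℕ → ℝ} {ρ : ℝ} (hρ : ρ ≠ 0)
    (hc : ∀ n, c n ≠ 0) (hr : Tendsto (fun n => c (n + 1) / c n) atTop (nhds ρ)) :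
    Tendsto (fun n : ℕ => (1 : ℝ) / n * Real.log (c n)) atTop (nhds (Real.log ρ)) := by
  have hinit : Tendsto (fun n : ℕ => (1 : ℝ) / n * Real.log (c 0)) atTop (nhds 0) := by
    simpa using tendsto_one_div_atTop_nhds_zero_nat.mul_const (Real.log (c 0))
  have hmean := (hr.log hρ).cesaro.add hinit
  rw [add_zero] at hmean
  refine hmean.congr fun n => ?_
  simp only [Real.log_div (hc _) (hc _)]
  rw [Finset.sum_range_sub (fun n => Real.log (c n))]
  ring

theorem tendsto_ratio_sub_succ {c : ℕ → ℝ} {ρ : ℝ} (hρ : ρ ≠ 1) (hc : ∀ n, c n ≠ 0)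
    (hr : Tendsto (fun n => c (n + 1) / c n) atTop (nhds ρ)) :
    Tendsto (fun n => (c (n + 1) - c (n + 2)) / (c n - c (n + 1))) atTop (nhds ρ) := by
  have hρ' : 1 - ρ ≠ 0 := sub_ne_zero.2 hρ.symm
  have hlim := hr.mul ((((tendsto_add_atTop_iff_nat 1).2 hr).const_sub 1).div (hr.const_sub 1) hρ')
  rw [div_self hρ', mul_one] at hlim
  refine hlim.congr fun n => ?_
  have hn := hc n
  have hn' := hc (n + 1)
  rw [Pi.div_apply, one_sub_div hn, one_sub_div hn', div_div_div_eq]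
  field_simp

theorem exists_tendsto_and_abs_sub_mem_Icc_of_alternating {x c : ℕ → ℝ} (hanti : Antitone c)
    (hsum : Summable c) (hx : ∀ n, x (n + 1) - x n = (-1) ^ n * c n) :
    ∃ L, Tendsto x atTop (nhds L) ∧ ∀ n, |L - x n| ∈ Set.Icc (c n - c (n + 1)) (c n) := by
  have hpartial (n : ℕ) : x n = x 0 + ∑ i ∈ Finset.range n, (-1) ^ i * c i := by
    simp only [← hx, Finset.sum_range_sub, add_sub_cancel]
  set L := x 0 + ∑' i, (-1) ^ i * c i with hL
  have hupper (n : ℕ) : |L - x n| ≤ c n := by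
    rw [hL, hpartial n, add_sub_add_left_eq_sub]
    exact alternating_series_error_bound c hanti hsum n
  have hlower (n : ℕ) : c n ≤ |L - x n| + |L - x (n + 1)| :=
    calc c n ≤ |c n| := le_abs_self _
      _ = |(L - x n) - (L - x (n + 1))| := by
        rw [sub_sub_sub_cancel_left, hx, abs_mul, abs_neg_one_pow, one_mul]
      _ ≤ |L - x n| + |L - x (n + 1)| := abs_sub _ _
  refine ⟨L, ?_, fun n => ⟨by linarith [hlower n, hupper (n + 1)], hupper n⟩⟩
  refine tendsto_iff_dist_tendsto_zero.2 (squeeze_zero (fun _ => dist_nonneg) (fun n => ?_)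
    hsum.tendsto_atTop_zero)
  rw [dist_comm, Real.dist_eq]
  exact hupper n

theorem exists_tendsto_and_tendsto_inv_mul_log_of_alternating {x c : ℕ → ℝ} {ρ : ℝ}
    (hρ₀ : 0 < ρ) (hρ₁ : ρ < 1) (hc : ∀ n, 0 < c n) (hanti : StrictAnti c)
    (hx : ∀ n, x (n + 1) - x n = (-1) ^ n * c n)
    (hr : Tendsto (fun n => c (n + 1) / c n) atTop (nhds ρ)) :
    ∃ L : ℝ, Tendsto x atTop (nhds L) ∧ (∀ n, L ≠ x n) ∧
      Tendsto (fun n : ℕ => (1 : ℝ) / n * Real.log |L - x n|) atTop (nhds (Real.log ρ)) := by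
  have hne (n : ℕ) : c n ≠ 0 := (hc n).ne'
  have hsum : Summable c := summable_of_ratio_test_tendsto_lt_one hρ₁ (.of_forall hne) <| by
    simpa only [Real.norm_eq_abs, abs_of_pos (hc _)] using hr
  obtain ⟨L, hL, herr⟩ := exists_tendsto_and_abs_sub_mem_Icc_of_alternating hanti.antitone hsum hx
  have hgap (n : ℕ) : 0 < c n - c (n + 1) := sub_pos.2 (hanti n.lt_succ_self)
  have herr_pos (n : ℕ) : 0 < |L - x n| := (hgap n).trans_le (herr n).1
  refine ⟨L, hL, fun n => sub_ne_zero.1 (abs_pos.1 (herr_pos n)), ?_⟩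
  refine tendsto_of_tendsto_of_tendsto_of_le_of_le
    (tendsto_inv_mul_log_of_tendsto_ratio hρ₀.ne' (fun n => (hgap n).ne')
      (tendsto_ratio_sub_succ hρ₁.ne hne hr))
    (tendsto_inv_mul_log_of_tendsto_ratio hρ₀.ne' hne hr) (fun n => ?_) (fun n => ?_)
  · exact mul_le_mul_of_nonneg_left (Real.log_le_log (hgap n) (herr n).1) (by positivity)
  · exact mul_le_mul_of_nonneg_left (Real.log_le_log (herr_pos n) (herr n).2) (by positivity)

theorem abs_mobius_one_add_div_le {s β t : ℝ} (hs : 1 ≤ s) (hβ : 0 ≤ β) (ht : 1 ≤ t) :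
    |(1 + β / s - t) / (1 + β / s + t - 1)| ≤
      (t - 1) / t * |(s - t) / (s + t - 1)| + 2 * |β - t * (t - 1)| := by
  have hs₀ : 0 < s := by linarith
  have ht₀ : 0 < t := by linarith
  have hst : 1 ≤ s + t - 1 := by linarith
  have hden : 0 < β + t * s := by positivity
  set r := (2 * t - 1) * s / (t * (s + t - 1) * (β + t * s)) with hr
  have hsplit : (1 + β / s - t) / (1 + β / s + t - 1) =
      r * (β - t * (t - 1)) - (t - 1) / t * ((s - t) / (s + t - 1)) := by
    have hden' : 1 + β / s + t - 1 = (β + t * s) / s := by field_simp; ring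
    have hst₀ : s + t - 1 ≠ 0 := by linarith
    rw [hden', hr]
    field_simp
    ring
  have hr₀ : 0 ≤ r := div_nonneg (mul_nonneg (by linarith) hs₀.le) (by positivity)
  have hr₂ : r ≤ 2 := by
    have hfactor : 1 ≤ t * (s + t - 1) := one_le_mul_of_one_le_of_one_le ht hst
    rw [hr, div_le_iff₀ (by positivity)]
    calc (2 * t - 1) * s ≤ 2 * (β + t * s) := by linarith
      _ ≤ 2 * (t * (s + t - 1) * (β + t * s)) := by
        gcongr
        exact le_mul_of_one_le_left hden.le hfactor
  calc |(1 + β / s - t) / (1 + β / s + t - 1)|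
      ≤ |r * (β - t * (t - 1))| + |(t - 1) / t * ((s - t) / (s + t - 1))| :=
        hsplit ▸ abs_sub _ _
    _ = (t - 1) / t * |(s - t) / (s + t - 1)| + r * |β - t * (t - 1)| := by
        rw [abs_mul, abs_mul, abs_of_nonneg hr₀,
          abs_of_nonneg (div_nonneg (sub_nonneg.2 ht) ht₀.le), add_comm]
    _ ≤ _ := by gcongr

theorem tendsto_of_succ_eq_one_add_div {s β : ℕ → ℝ} {t : ℝ} (ht : 1 ≤ t) (hβ : ∀ n, 0 ≤ β n)
    (hs₀ : 1 ≤ s 0) (hs : ∀ n, s (n + 1) = 1 + β n / s n)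
    (hlim : Tendsto β atTop (nhds (t * (t - 1)))) : Tendsto s atTop (nhds t) := by
  have hs_ge (n : ℕ) : 1 ≤ s n := by
    induction n with
    | zero => exact hs₀
    | succ n ih =>
      rw [hs]
      exact le_add_of_nonneg_right (div_nonneg (hβ n) (zero_le_one.trans ih))
  set u : ℕ → ℝ := fun n => (s n - t) / (s n + t - 1) with hu
  have herr : Tendsto (fun n => 2 * |β n - t * (t - 1)|) atTop (nhds 0) := by
    simpa using ((hlim.sub_const (t * (t - 1))).abs).const_mul 2
  have hu_lim : Tendsto u atTop (nhds 0) := by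
    refine (tendsto_zero_iff_abs_tendsto_zero u).2 (tendsto_zero_of_le_mul_add (κ := (t - 1) / t)
      (by bound) ((div_lt_one (by linarith)).2 (by linarith)) (fun n => abs_nonneg _) herr
      fun n => ?_)
    simp only [Function.comp_apply, hu, hs n]
    exact abs_mobius_one_add_div_le (hs_ge n) (hβ n) ht
  have hs_eq (n : ℕ) : (t + (t - 1) * u n) / (1 - u n) = s n := by
    have hden : s n + t - 1 ≠ 0 := by linarith [hs_ge n]
    have hsub : 1 - u n = (2 * t - 1) / (s n + t - 1) := by simp only [hu]; field_simp; ring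
    have ht' : 2 * t - 1 ≠ 0 := by linarith
    rw [hsub, div_div_eq_mul_div, div_eq_iff ht']
    simp only [hu]
    field_simp
    ring
  have hinv : Tendsto (fun n => (t + (t - 1) * u n) / (1 - u n)) atTop
      (nhds ((t + (t - 1) * 0) / (1 - 0))) :=
    ((hu_lim.const_mul (t - 1)).const_add t).div (hu_lim.const_sub 1) (by norm_num)
  simpa [hs_eq] using hinv

/-- `p` and `q` are the numerators and denominators of the convergents of the continued fraction
`a 0 + b 1 / (a 1 + b 2 / (a 2 + ⋯))`. The conventional values `1` and `0` at index `-1` are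
eliminated by prescribing the values at `1`. -/
structure IsConvergents {R : Type*} [CommRing R] (a b p q : ℕ → R) : Prop where
  num_zero : p 0 = a 0
  num_one : p 1 = a 1 * a 0 + b 1
  num_add_two (n : ℕ) : p (n + 2) = a (n + 2) * p (n + 1) + b (n + 2) * p n
  den_zero : q 0 = 1
  den_one : q 1 = a 1
  den_add_two (n : ℕ) : q (n + 2) = a (n + 2) * q (n + 1) + b (n + 2) * q n

/-- The absolute value of the difference of the `n`-th and `(n + 1)`-st convergents of a continued
fraction with positive partial numerators `b` and convergent denominators `q`. -/
noncomputable def convergentGap (b q : ℕ → ℝ) (n : ℕ) : ℝ :=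
  (∏ k ∈ Finset.range (n + 1), b (k + 1)) / (q n * q (n + 1))

/-- The ratio of consecutive convergent denominators, normalised by the partial denominator: it
measures by how much `q (n + 1)` exceeds the first term of its recurrence. -/
noncomputable def normalizedDenRatio (a q : ℕ → ℝ) (n : ℕ) : ℝ :=
  q (n + 1) / (a (n + 1) * q n)

namespace IsConvergents

theorem map {R S : Type*} [CommRing R] [CommRing S] {a b p q : ℕ → R}
    (h : IsConvergents a b p q) (f : R →+* S) :
    IsConvergents (fun n => f (a n)) (fun n => f (b n)) (fun n => f (p n)) (fun n => f (q n)) where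
  num_zero := congrArg f h.num_zero
  num_one := by simp only [h.num_one, map_add, map_mul]
  num_add_two n := by simp only [h.num_add_two, map_add, map_mul]
  den_zero := by rw [h.den_zero, map_one]
  den_one := congrArg f h.den_one
  den_add_two n := by simp only [h.den_add_two, map_add, map_mul]

theorem determinant {R : Type*} [CommRing R] {a b p q : ℕ → R} (h : IsConvergents a b p q) (n : ℕ) :
    p (n + 1) * q n - p n * q (n + 1) = (-1) ^ n * ∏ k ∈ Finset.range (n + 1), b (k + 1) := by
  induction n with
  | zero =>
    simp only [zero_add, h.num_zero, h.num_one, h.den_zero, h.den_one, Finset.prod_range_one]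
    ring
  | succ n ih =>
    rw [h.num_add_two, h.den_add_two, Finset.prod_range_succ, pow_succ]
    linear_combination -b (n + 2) * ih

variable {a b p q : ℕ → ℝ}

theorem den_pos (h : IsConvergents a b p q) (ha : ∀ n, 0 < a (n + 1)) (hb : ∀ n, 0 ≤ b (n + 1)) :
    ∀ n, 0 < q n
  | 0 => h.den_zero ▸ one_pos
  | 1 => h.den_one ▸ ha 0
  | n + 2 => h.den_add_two n ▸ add_pos_of_pos_of_nonneg
      (mul_pos (ha (n + 1)) (h.den_pos ha hb (n + 1)))
      (mul_nonneg (hb (n + 1)) (h.den_pos ha hb n).le)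

theorem div_succ_sub_div (h : IsConvergents a b p q) (hq : ∀ n, q n ≠ 0) (n : ℕ) :
    p (n + 1) / q (n + 1) - p n / q n = (-1) ^ n * convergentGap b q n := by
  rw [convergentGap, ← mul_div_assoc, ← h.determinant, div_sub_div _ _ (hq _) (hq _)]
  ring

theorem normalizedDenRatio_zero (h : IsConvergents a b p q) (ha : a 1 ≠ 0) :
    normalizedDenRatio a q 0 = 1 := by
  rw [normalizedDenRatio, zero_add, h.den_one, h.den_zero, mul_one, div_self ha]

theorem normalizedDenRatio_succ (h : IsConvergents a b p q) (ha : ∀ n, a (n + 1) ≠ 0)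
    (hq : ∀ n, q n ≠ 0) (n : ℕ) :
    normalizedDenRatio a q (n + 1) =
      1 + b (n + 2) / (a (n + 1) * a (n + 2)) / normalizedDenRatio a q n := by
  have ha₁ := ha n
  have ha₂ := ha (n + 1)
  have hq₁ := hq (n + 1)
  rw [normalizedDenRatio, normalizedDenRatio, h.den_add_two]
  field_simp

theorem convergentGap_succ_div (h : IsConvergents a b p q) (hb : ∀ n, b (n + 1) ≠ 0)
    (hq : ∀ n, q n ≠ 0) (n : ℕ) :
    convergentGap b q (n + 1) / convergentGap b q n = 1 - 1 / normalizedDenRatio a q (n + 1) := by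
  have hprod : ∏ k ∈ Finset.range (n + 1), b (k + 1) ≠ 0 :=
    Finset.prod_ne_zero_iff.2 fun k _ => hb k
  have hq₁ := hq (n + 1)
  have hq₂ := hq (n + 2)
  rw [convergentGap, convergentGap, normalizedDenRatio, Finset.prod_range_succ _ (n + 1)]
  field_simp
  linear_combination -h.den_add_two n

theorem tendsto_normalizedDenRatio (h : IsConvergents a b p q) (ha : ∀ n, 0 < a (n + 1))
    (hb : ∀ n, 0 ≤ b (n + 1)) {t : ℝ} (ht : 1 ≤ t)
    (hlim : Tendsto (fun n => b (n + 1) / (a n * a (n + 1))) atTop (nhds (t * (t - 1)))) :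
    Tendsto (normalizedDenRatio a q) atTop (nhds t) := by
  have ha' (n : ℕ) : a (n + 1) ≠ 0 := (ha n).ne'
  have hq (n : ℕ) : q n ≠ 0 := (h.den_pos ha hb n).ne'
  exact tendsto_of_succ_eq_one_add_div ht
    (fun n => div_nonneg (hb (n + 1)) (mul_pos (ha n) (ha (n + 1))).le)
    (h.normalizedDenRatio_zero (ha' 0)).ge (h.normalizedDenRatio_succ ha' hq)
    ((tendsto_add_atTop_iff_nat 1).2 hlim)

theorem exists_tendsto_and_tendsto_inv_mul_log_error (h : IsConvergents a b p q)
    (ha : ∀ n, 0 < a (n + 1)) (hb : ∀ n, 0 < b (n + 1)) {t : ℝ} (ht : 1 < t)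
    (hlim : Tendsto (fun n => b (n + 1) / (a n * a (n + 1))) atTop (nhds (t * (t - 1)))) :
    ∃ L : ℝ, Tendsto (fun n => p n / q n) atTop (nhds L) ∧ (∀ n, L ≠ p n / q n) ∧
      Tendsto (fun n : ℕ => (1 : ℝ) / n * Real.log |L - p n / q n|) atTop
        (nhds (Real.log (1 - 1 / t))) := by
  have hq := h.den_pos ha fun n => (hb n).le
  have hq' (n : ℕ) : q n ≠ 0 := (hq n).ne'
  have hratio := h.convergentGap_succ_div (fun n => (hb n).ne') hq'
  have hgap (n : ℕ) : 0 < convergentGap b q n :=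
    div_pos (Finset.prod_pos fun k _ => hb k) (mul_pos (hq n) (hq (n + 1)))
  have hanti : StrictAnti (convergentGap b q) := strictAnti_nat_of_succ_lt fun n => by
    have hs : 0 < normalizedDenRatio a q (n + 1) :=
      div_pos (hq (n + 2)) (mul_pos (ha (n + 1)) (hq (n + 1)))
    rw [← div_lt_one (hgap n), hratio]
    exact sub_lt_self 1 (one_div_pos.2 hs)
  have hratio_lim : Tendsto (fun n => convergentGap b q (n + 1) / convergentGap b q n) atTop
      (nhds (1 - 1 / t)) := by
    simp only [hratio]
    have hs := (tendsto_add_atTop_iff_nat 1).2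
      (h.tendsto_normalizedDenRatio ha (fun n => (hb n).le) ht.le hlim)
    exact (tendsto_const_nhds.div hs (by positivity)).const_sub 1
  exact exists_tendsto_and_tendsto_inv_mul_log_of_alternating
    (sub_pos.2 ((div_lt_one (by positivity)).2 ht)) (sub_lt_self 1 (by positivity)) hgap hanti
    (h.div_succ_sub_div hq') hratio_lim

end IsConvergents

theorem stmt_18_general {a b p q : ℕ → ℝ} {A B α : ℝ} (h : IsConvergents a b p q)
    (ha : ∀ n, 0 < a (n + 1)) (hb : ∀ n, 0 < b (n + 1)) (hA : 0 < A) (hB : 0 < B)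
    (hlim : Tendsto (fun n => b (n + 1) / (a n * a (n + 1))) atTop (nhds (B / A ^ 2)))
    (hα : α = (A + Real.sqrt (A ^ 2 + 4 * B)) / 2) :
    ∃ L : ℝ, Tendsto (fun n => p n / q n) atTop (nhds L) ∧ (∀ n, L ≠ p n / q n) ∧
      Tendsto (fun n : ℕ => (1 : ℝ) / n * Real.log |L - p n / q n|) atTop
        (nhds (Real.log B - 2 * Real.log α)) := by
  have hroot : α ^ 2 = A * α + B := by
    rw [hα]
    linear_combination Real.sq_sqrt (show 0 ≤ A ^ 2 + 4 * B by positivity) / 4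
  have hα₀ : 0 < α := hα ▸ by positivity
  have hAα : A < α := by nlinarith
  have hfixed : B / A ^ 2 = α / A * (α / A - 1) := by
    field_simp
    linear_combination -hroot
  have hrate : Real.log (1 - 1 / (α / A)) = Real.log B - 2 * Real.log α := by
    have hquot : 1 - 1 / (α / A) = B / α ^ 2 := by
      field_simp
      linear_combination hroot
    rw [hquot, Real.log_div hB.ne' (by positivity), Real.log_pow, Nat.cast_ofNat]
  rw [← hrate]
  exact h.exists_tendsto_and_tendsto_inv_mul_log_error ha hb ((one_lt_div hA).2 hAα) (hfixed ▸ hlim)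

theorem tendsto_eval_add_div_eval_mul_eval_add {𝕜 : Type*} [NormedField 𝕜] [LinearOrder 𝕜]
    [IsStrictOrderedRing 𝕜] [OrderTopology 𝕜] {P Q : 𝕜[X]} (hdeg : Q.degree = 2 • P.degree)
    (r : 𝕜) :
    Tendsto (fun x => Q.eval (x + r) / (P.eval x * P.eval (x + r))) atTop
      (nhds (Q.leadingCoeff / P.leadingCoeff ^ 2)) := by
  have hdeg' : (taylor r Q).degree = (P * taylor r P).degree := by
    rw [degree_mul, degree_taylor, degree_taylor, hdeg, two_nsmul]
  have hlead : (P * taylor r P).leadingCoeff = P.leadingCoeff ^ 2 := by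
    rw [leadingCoeff_mul, leadingCoeff_taylor, sq]
  simpa only [leadingCoeff_taylor, hlead, eval_mul, taylor_eval] using
    div_tendsto_atTop_leadingCoeff_div_of_degree_eq _ _ hdeg'

theorem tendsto_intCast_eval_div_eval_mul_eval {P Q : ℤ[X]} (hdeg : Q.degree = 2 • P.degree) :
    Tendsto (fun n : ℕ => ((Q.eval ((n + 1 : ℕ) : ℤ) : ℤ) : ℝ) /
      ((P.eval (n : ℤ) : ℤ) * (P.eval ((n + 1 : ℕ) : ℤ) : ℤ))) atTop
      (nhds ((Q.leadingCoeff : ℝ) / (P.leadingCoeff : ℝ) ^ 2)) := by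
  have hinj : Function.Injective (Int.castRingHom ℝ) := Int.cast_injective
  have hreal := (tendsto_eval_add_div_eval_mul_eval_add (P := P.map (Int.castRingHom ℝ))
    (Q := Q.map (Int.castRingHom ℝ))
    (by rwa [degree_map_eq_of_injective hinj, degree_map_eq_of_injective hinj]) 1).comp
    tendsto_natCast_atTop_atTop
  simp only [leadingCoeff_map_of_injective hinj] at hreal
  refine hreal.congr fun n => ?_
  simp only [Function.comp_apply, ← Nat.cast_succ, eval_natCast_map, eq_intCast]

/-- Appendix B, balanced case: convergence error
`|L − pₙ/qₙ| ≐ (B/α²)ⁿ`. With `deg a = d`, `deg b = 2d`, positive leading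
coefficients `A, B`, positive values on positive integers, and
`α = (A + √(A² + 4B))/2`, the limit `L` of the convergents exists, differs from
every convergent, and `lim (1/n)·ln|L − pₙ/qₙ| = ln B − 2 ln α`. -/
theorem stmt_18 (d : ℕ) (hd : 1 ≤ d) (a b : Polynomial ℤ)
    (hda : a.natDegree = d) (hdb : b.natDegree = 2 * d)
    (hA : 0 < a.leadingCoeff) (hB : 0 < b.leadingCoeff)
    (hapos : ∀ n : ℕ, 1 ≤ n → 0 < a.eval (n : ℤ))
    (hbpos : ∀ n : ℕ, 1 ≤ n → 0 < b.eval (n : ℤ))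
    (p q : ℕ → ℤ)
    (hp0 : p 0 = a.eval 0) (hq0 : q 0 = 1)
    (hp1 : p 1 = a.eval 1 * p 0 + b.eval 1 * 1)
    (hq1 : q 1 = a.eval 1 * q 0 + b.eval 1 * 0)
    (hprec : ∀ n : ℕ, p (n + 2) = a.eval ((n : ℤ) + 2) * p (n + 1) + b.eval ((n : ℤ) + 2) * p n)
    (hqrec : ∀ n : ℕ, q (n + 2) = a.eval ((n : ℤ) + 2) * q (n + 1) + b.eval ((n : ℤ) + 2) * q n)
    (α : ℝ)
    (hα : α = ((a.leadingCoeff : ℝ) +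
      Real.sqrt ((a.leadingCoeff : ℝ) ^ 2 + 4 * (b.leadingCoeff : ℝ))) / 2) :
    ∃ L : ℝ, Tendsto (fun n : ℕ => (p n : ℝ) / (q n : ℝ)) atTop (nhds L) ∧
      (∀ n : ℕ, L ≠ (p n : ℝ) / (q n : ℝ)) ∧
      Tendsto (fun n : ℕ => (1 : ℝ) / n * Real.log |L - (p n : ℝ) / (q n : ℝ)|)
        atTop (nhds (Real.log (b.leadingCoeff : ℝ) - 2 * Real.log α)) := by
  have hconv : IsConvergents (fun n => a.eval (n : ℤ)) (fun n => b.eval (n : ℤ)) p q :=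
    { num_zero := hp0
      num_one := by simpa [hp0] using hp1
      num_add_two := by simpa using hprec
      den_zero := hq0
      den_one := by simpa [hq0] using hq1
      den_add_two := by simpa using hqrec }
  have hdeg : b.degree = 2 • a.degree := by
    rw [degree_eq_natDegree (leadingCoeff_ne_zero.1 hA.ne'),
      degree_eq_natDegree (leadingCoeff_ne_zero.1 hB.ne'), hda, hdb, nsmul_eq_mul]
    rfl
  exact stmt_18_general (hconv.map (Int.castRingHom ℝ))
    (fun n => Int.cast_pos.2 (hapos (n + 1) n.succ_pos))
    (fun n => Int.cast_pos.2 (hbpos (n + 1) n.succ_pos)) (Int.cast_pos.2 hA) (Int.cast_pos.2 hB)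
    (tendsto_intCast_eval_div_eval_mul_eval hdeg) hα
end
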